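/- Let r > 0, let n ≥ 1 be an integer, and let u, w ∈ X_r satisfy √n·w − (1/p⁰)Q(w,w) = u in L¹(ℝ³). Then ‖√n·w‖ = ‖u‖, i.e. √n‖w‖ = ‖u‖. -/

import Mathlib

/-!
Integrating the equation over `ℝ³` reduces the claim to `∫ Q(w,w) dp̄/p⁰ = 0`, i.e. to the equality
of the integrals of gain and loss. Write `μ` for the measure `dp̄/p⁰` (`invMeas`). For a fixed
direction `ω` the collision map `(p̄, q̄) ↦ (p̄′, q̄′)` (`coll`) is an involution (`coll_coll`) which
preserves `μ ⊗ μ` (`measurePreserving_coll`). As `S₀` is symmetric, this map carries the loss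
integrand `w(p̄) w(q̄) S₀` to the gain integrand `w(p̄′) w(q̄′) S₀`. The loss integrand is integrable
because `S₀` is bounded and `1/p⁰ ≤ 1`, so Fubini concludes (`integral_gain_loss`).

The invariance is obtained without computing a Jacobian in six variables. Decompose
`p̄ = x ω̂ + v` with `v` orthogonal to `ω̂` for the metric; the collision changes only the components
along `ω̂`. Put `x = a sinh θ` with `a = √(1+|v|²)`, so that `p⁰ = a cosh θ` and `dx/p⁰ = dθ`:
in the coordinates `(θ, v)` the measure `μ` is a product measure (`measurePreserving_Psi`).
The collision is the reflection of the rapidities `θ, φ` of the two particles at the rapidity of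
their total momentum (`coll_Psi`). With `δ = φ - θ` it reads `δ ↦ -δ`, `θ ↦ θ + s(δ)`, where
`s(δ) = log ((a + b exp δ) / (a + b exp (-δ)))` is odd and `b` is the transverse mass of the second
particle. Such a map is visibly an involution and preserves `dθ dφ` by translation invariance
(`lintegral_shear`).
-/

open MeasureTheory Real

noncomputable section

/-- Momentum space `ℝ³`. -/
abbrev E3 : Type := EuclideanSpace ℝ (Fin 3)

/-- The scalar product associated with the Bianchi type I metric coefficients `α = a(t)`,
`β = b(t)`: `p̄·q̄ = α²p¹q¹ + β²(p²q² + p³q³)`. -/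
def mdot (α β : ℝ) (p q : E3) : ℝ :=
  α ^ 2 * p 0 * q 0 + β ^ 2 * (p 1 * q 1 + p 2 * q 2)

/-- `p⁰ = √(1 + |p̄|²)` where `|p̄|² = p̄·p̄`. -/
def pZ (α β : ℝ) (p : E3) : ℝ := Real.sqrt (1 + mdot α β p p)

/-- `ω` normalized to unit length for the metric norm. -/
def omHat (α β : ℝ) (ω : E3) : E3 := (Real.sqrt (mdot α β ω ω))⁻¹ • ω

/-- The total energy `e = p⁰ + q⁰`. -/
def collE (α β : ℝ) (p q : E3) : ℝ := pZ α β p + pZ α β q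

/-- The function `C(p̄, q̄, ω)` of Glassey's representation of post-collisional momenta. -/
def collC (α β : ℝ) (p q ω : E3) : ℝ :=
  2 * pZ α β p * pZ α β q * collE α β p q *
      mdot α β (omHat α β ω) ((pZ α β q)⁻¹ • q - (pZ α β p)⁻¹ • p) /
    (collE α β p q ^ 2 - mdot α β (omHat α β ω) (p + q) ^ 2)

/-- The post-collisional momentum `p̄′ = p̄ + C(p̄,q̄,ω)ω̂`. -/
def pPr (α β : ℝ) (p q ω : E3) : E3 := p + collC α β p q ω • omHat α β ω

/-- The post-collisional momentum `q̄′ = q̄ − C(p̄,q̄,ω)ω̂`. -/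
def qPr (α β : ℝ) (p q ω : E3) : E3 := q - collC α β p q ω • omHat α β ω

/-- The surface measure on the unit sphere `S² ⊂ ℝ³`. -/
def sphMeas : Measure (Metric.sphere (0 : E3) 1) := (volume : Measure E3).toSphere

/-- The gain term `Q⁺(f,g)`. -/
def Qplus (α β : ℝ) (S₀ : E3 → E3 → E3 → E3 → ℝ) (f g : E3 → ℝ) (p : E3) : ℝ :=
  α * β ^ 2 *
    ∫ q : E3, (pZ α β q)⁻¹ *
      ∫ ω : Metric.sphere (0 : E3) 1,
        f (pPr α β p q ω) * g (qPr α β p q ω) *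
          S₀ p q (pPr α β p q ω) (qPr α β p q ω) ∂sphMeas

/-- The loss term `Q⁻(f,g)`. -/
def Qminus (α β : ℝ) (S₀ : E3 → E3 → E3 → E3 → ℝ) (f g : E3 → ℝ) (p : E3) : ℝ :=
  α * β ^ 2 *
    ∫ q : E3, (pZ α β q)⁻¹ *
      ∫ ω : Metric.sphere (0 : E3) 1,
        f p * g q * S₀ p q (pPr α β p q ω) (qPr α β p q ω) ∂sphMeas

/-- The collision operator `Q = Q⁺ − Q⁻`. -/
def Qcoll (α β : ℝ) (S₀ : E3 → E3 → E3 → E3 → ℝ) (f g : E3 → ℝ) (p : E3) : ℝ :=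
  Qplus α β S₀ f g p - Qminus α β S₀ f g p

/-- The space `L¹(ℝ³)`. -/
abbrev L1 : Type := Lp ℝ 1 (volume : Measure E3)

/-- Membership in `X_r = {f ∈ L¹(ℝ³) : f ≥ 0 a.e., ‖f‖ ≤ r}`. -/
def memX (r : ℝ) (f : L1) : Prop := (0 ≤ᵐ[volume] ⇑f) ∧ ‖f‖ ≤ r

end

noncomputable section

/-! ### The metric scalar product -/


lemma mdot_add_right (α β : ℝ) (p q s : E3) :
    mdot α β p (q + s) = mdot α β p q + mdot α β p s := by
  simp [mdot]; ring

lemma mdot_smul_right (α β : ℝ) (c : ℝ) (p q : E3) :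
    mdot α β p (c • q) = c * mdot α β p q := by
  simp [mdot]; ring

lemma mdot_comm (α β : ℝ) (p q : E3) : mdot α β p q = mdot α β q p := by
  simp [mdot]; ring

lemma mdot_self_nonneg (α β : ℝ) (p : E3) : 0 ≤ mdot α β p p := by
  have : mdot α β p p = (α * p 0) ^ 2 + (β * p 1) ^ 2 + (β * p 2) ^ 2 := by
    simp [mdot]; ring
  rw [this]; positivity

lemma mdot_self_pos {α β : ℝ} (hα : 0 < α) (hβ : 0 < β) {p : E3} (hp : p ≠ 0) :
    0 < mdot α β p p := by
  have h : mdot α β p p = (α * p 0) ^ 2 + (β * p 1) ^ 2 + (β * p 2) ^ 2 := by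
    simp [mdot]; ring
  rcases (mdot_self_nonneg α β p).lt_or_eq with h0 | h0
  · exact h0
  · exfalso; apply hp
    rw [h] at h0
    have n1 := sq_nonneg (α * p 0)
    have n2 := sq_nonneg (β * p 1)
    have n3 := sq_nonneg (β * p 2)
    have h1 : (α * p 0) ^ 2 = 0 := by linarith
    have h2 : (β * p 1) ^ 2 = 0 := by linarith
    have h3 : (β * p 2) ^ 2 = 0 := by linarith
    ext i
    fin_cases i
    · simpa [hα.ne'] using h1
    · simpa [hβ.ne'] using h2
    · simpa [hβ.ne'] using h3

lemma mdot_omHat {α β : ℝ} (hα : 0 < α) (hβ : 0 < β) {ω : E3} (hω : ω ≠ 0) :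
    mdot α β (omHat α β ω) (omHat α β ω) = 1 := by
  have h := mdot_self_pos hα hβ hω
  rw [omHat, mdot_smul_right, mdot_comm α β (_ • ω), mdot_smul_right, ← mul_assoc, ← mul_inv,
    Real.mul_self_sqrt h.le, inv_mul_cancel₀ h.ne']

lemma pZ_ge_one (α β : ℝ) (p : E3) : 1 ≤ pZ α β p := by
  rw [pZ, Real.one_le_sqrt]; linarith [mdot_self_nonneg α β p]

/-! ### Orthogonal decomposition along the collision direction -/

/-- The linear form `p̄ ↦ o·p̄`. -/
def mform (α β : ℝ) (o : E3) : E3 →ₗ[ℝ] ℝ where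
  toFun := mdot α β o
  map_add' := mdot_add_right α β o
  map_smul' c p := mdot_smul_right α β c o p

/-- The plane orthogonal to `o` for the metric scalar product. -/
abbrev Perp (α β : ℝ) (o : E3) : Submodule ℝ E3 := LinearMap.ker (mform α β o)

lemma mdot_perp {α β : ℝ} {o : E3} (v : Perp α β o) : mdot α β o v = 0 :=
  LinearMap.mem_ker.1 v.2

/-- The orthogonal decomposition `(x, v) ↦ x o + v` of momentum space along a metric unit
vector `o`. -/
def decomp {α β : ℝ} {o : E3} (ho : mdot α β o o = 1) : (ℝ × Perp α β o) ≃ₗ[ℝ] E3 where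
  toFun z := z.1 • o + z.2
  map_add' z z' := by simp [add_smul]; abel
  map_smul' c z := by simp [mul_smul]
  invFun p := (mdot α β o p, ⟨p - mdot α β o p • o, by
    rw [LinearMap.mem_ker, map_sub, map_smul]
    change mdot α β o p - mdot α β o p * mdot α β o o = 0
    rw [ho]; ring⟩)
  left_inv z := by
    have h : mdot α β o (z.1 • o + z.2) = z.1 := by
      rw [mdot_add_right, mdot_smul_right, ho, mdot_perp]; ring
    ext1
    · exact h
    · ext1; simp [h]
  right_inv p := by simp

lemma mdot_line {α β : ℝ} {o : E3} (ho : mdot α β o o = 1) (x : ℝ) (v : Perp α β o) :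
    mdot α β o (x • o + v) = x := by
  rw [mdot_add_right, mdot_smul_right, ho, mdot_perp]; ring

lemma mdot_self_line {α β : ℝ} {o : E3} (ho : mdot α β o o = 1) (x : ℝ) (v : Perp α β o) :
    mdot α β (x • o + v) (x • o + v) = x ^ 2 + mdot α β v v := by
  rw [mdot_add_right, mdot_smul_right, mdot_comm, mdot_line ho, mdot_comm, mdot_add_right,
    mdot_smul_right, mdot_comm α β _ o, mdot_perp]; ring

/-- After rescaling, the product of Lebesgue measure on the line and a Haar measure on the
orthogonal plane is Lebesgue measure on momentum space. -/
lemma exists_perp_measure {α β : ℝ} {o : E3} (ho : mdot α β o o = 1) :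
    ∃ ρ : Measure (Perp α β o), SFinite ρ ∧
      MeasurePreserving (decomp ho) ((volume : Measure ℝ).prod ρ) volume := by
  let A : (ℝ × Perp α β o) ≃L[ℝ] E3 := (decomp ho).toContinuousLinearEquiv
  have h := Measure.isAddLeftInvariant_eq_smul (volume : Measure E3)
    (Measure.map A ((volume : Measure ℝ).prod (volume : Measure (Perp α β o))))
  refine ⟨Measure.addHaarScalarFactor (volume : Measure E3)
    (Measure.map A ((volume : Measure ℝ).prod (volume : Measure (Perp α β o)))) • volume,
    inferInstance, A.continuous.measurable, ?_⟩
  rw [Measure.prod_smul_right, Measure.map_smul]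
  exact h.symm

lemma measurable_pZ (α β : ℝ) : Measurable (pZ α β) := by
  unfold pZ mdot; fun_prop

/-! ### Rapidity coordinates -/

/-- The density `1/p⁰` as an `ℝ≥0`-valued function. -/
def dens (α β : ℝ) (p : E3) : NNReal := Real.toNNReal (pZ α β p)⁻¹

/-- The Lorentz-invariant measure `dp̄/p⁰` on the mass shell. -/
def invMeas (α β : ℝ) : Measure E3 := volume.withDensity fun p => (dens α β p : ENNReal)

lemma measurable_dens (α β : ℝ) : Measurable (dens α β) :=
  ((measurable_pZ α β).inv).real_toNNReal

lemma coe_dens (α β : ℝ) (p : E3) : (dens α β p : ℝ) = (pZ α β p)⁻¹ :=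
  Real.coe_toNNReal _ (inv_nonneg.2 (zero_le_one.trans (pZ_ge_one α β p)))

instance (α β : ℝ) : SFinite (invMeas α β) := by unfold invMeas; infer_instance

/-- The transverse mass `√(1+|v|²)`. -/
def tmass (α β : ℝ) (v : E3) : ℝ := √(1 + mdot α β v v)

lemma tmass_pos (α β : ℝ) (v : E3) : 0 < tmass α β v :=
  Real.sqrt_pos.2 (by linarith [mdot_self_nonneg α β v])

lemma measurable_tmass (α β : ℝ) : Measurable (tmass α β) := measurable_pZ α β

/-- Momenta in terms of the rapidity `θ` along `o` and the transverse momentum `v`. -/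
def Psi {α β : ℝ} {o : E3} (z : ℝ × Perp α β o) : E3 :=
  (tmass α β z.2 * sinh z.1) • o + z.2

lemma measurable_Psi {α β : ℝ} {o : E3} : Measurable (Psi : ℝ × Perp α β o → E3) := by
  have h := measurable_tmass α β
  unfold Psi; fun_prop

lemma pZ_line {α β : ℝ} {o : E3} (ho : mdot α β o o = 1) (θ : ℝ) (v : Perp α β o) :
    pZ α β ((tmass α β v * sinh θ) • o + v) = tmass α β v * cosh θ := by
  rw [pZ, mdot_self_line ho]
  rw [Real.sqrt_eq_iff_mul_self_eq_of_pos (mul_pos (tmass_pos α β v) (cosh_pos θ))]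
  have h : tmass α β v ^ 2 = 1 + mdot α β v v :=
    Real.sq_sqrt (by linarith [mdot_self_nonneg α β (v : E3)])
  have := Real.cosh_sq θ
  linear_combination (tmass α β v) ^ 2 * this + h

/-- The substitution `x = m sinh θ`. -/
lemma lintegral_rapidity {m : ℝ} (hm : 0 < m) (g : ℝ → ENNReal) :
    ∫⁻ x, g x = ∫⁻ θ, ENNReal.ofReal (m * cosh θ) * g (m * sinh θ) := by
  have hs : Set.univ = (fun θ => m * sinh θ) '' Set.univ := by
    rw [Set.image_univ, eq_comm, Set.range_eq_univ]
    intro x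
    exact ⟨arsinh (x / m), by simp only [sinh_arsinh]; field_simp⟩
  have h := lintegral_image_eq_lintegral_abs_deriv_mul (s := Set.univ)
    (f := fun θ => m * sinh θ) (f' := fun θ => m * cosh θ) MeasurableSet.univ
    (fun θ _ => ((hasDerivAt_sinh θ).const_mul m).hasDerivWithinAt)
    (fun a _ b _ hab => sinh_injective (mul_left_cancel₀ hm.ne' hab)) g
  rw [← hs] at h
  simpa [abs_of_pos hm, abs_of_pos (cosh_pos _), abs_mul] using h

/-- Since `dx/p⁰ = dθ` for `x = √(1+|v|²) sinh θ`, rapidity coordinates turn `dp̄/p⁰` into a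
product measure. -/
lemma measurePreserving_Psi {α β : ℝ} {o : E3} (ho : mdot α β o o = 1)
    {ρ : Measure (Perp α β o)} [SFinite ρ]
    (hρ : MeasurePreserving (decomp ho) ((volume : Measure ℝ).prod ρ) volume) :
    MeasurePreserving Psi ((volume : Measure ℝ).prod ρ) (invMeas α β) := by
  refine ⟨measurable_Psi, Measure.ext_of_lintegral _ fun f hf => ?_⟩
  have hd := (measurable_dens α β).coe_nnreal_ennreal
  rw [lintegral_map hf measurable_Psi, invMeas, lintegral_withDensity_eq_lintegral_mul _ hd hf,
    ← hρ.lintegral_comp (hd.mul hf),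
    lintegral_prod_symm' (fun z => f (Psi z)) (hf.comp measurable_Psi),
    lintegral_prod_symm' (fun z => ((fun x => (dens α β x : ENNReal)) * f) (decomp ho z))
      ((hd.mul hf).comp hρ.measurable)]
  refine lintegral_congr fun v => ?_
  conv_rhs => rw [lintegral_rapidity (tmass_pos α β v)]
  refine lintegral_congr fun θ => ?_
  have hpos := mul_pos (tmass_pos α β v) (cosh_pos θ)
  change f _ = _ * (ENNReal.ofReal (pZ α β ((tmass α β v * sinh θ) • o + v))⁻¹ * f _)
  rw [pZ_line ho, ← mul_assoc, ← ENNReal.ofReal_mul hpos.le, mul_inv_cancel₀ hpos.ne',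
    ENNReal.ofReal_one, one_mul]
  rfl

lemma Psi_surjective {α β : ℝ} {o : E3} (ho : mdot α β o o = 1) :
    Function.Surjective (Psi : ℝ × Perp α β o → E3) := by
  intro p
  obtain ⟨⟨x, v⟩, rfl⟩ := (decomp ho).surjective p
  refine ⟨(arsinh (x / tmass α β v), v), ?_⟩
  have := (tmass_pos α β v).ne'
  simp only [Psi, sinh_arsinh, mul_div_cancel₀ _ this]
  rfl

/-! ### The collision map in rapidity coordinates -/

/-- The rapidity shift of a particle of transverse mass `a` colliding with a particle of
transverse mass `b` and relative rapidity `δ`. It is twice the rapidity of the total momentum,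
measured from the first particle. -/
def shift (a b δ : ℝ) : ℝ := log ((a + b * exp δ) / (a + b * exp (-δ)))

lemma shift_neg (a b δ : ℝ) : shift a b (-δ) = - shift a b δ := by
  rw [shift, shift, neg_neg, ← Real.log_inv, inv_div]

/-- The collision in rapidity variables: the relative rapidity changes sign and the first
rapidity is translated by a function of the relative rapidity. -/
def rapColl {α β : ℝ} {o : E3} (z : (ℝ × Perp α β o) × (ℝ × Perp α β o)) :
    (ℝ × Perp α β o) × (ℝ × Perp α β o) :=
  ((z.1.1 + shift (tmass α β z.1.2) (tmass α β z.2.2) (z.2.1 - z.1.1), z.1.2),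
   (z.1.1 + shift (tmass α β z.1.2) (tmass α β z.2.2) (z.2.1 - z.1.1) - (z.2.1 - z.1.1), z.2.2))

lemma measurable_rapColl {α β : ℝ} {o : E3} :
    Measurable (rapColl : (ℝ × Perp α β o) × (ℝ × Perp α β o) → _) := by
  have h := measurable_tmass α β
  unfold rapColl shift; fun_prop

lemma rapColl_rapColl {α β : ℝ} {o : E3} (z : (ℝ × Perp α β o) × (ℝ × Perp α β o)) :
    rapColl (rapColl z) = z := by
  obtain ⟨⟨θ, v⟩, ⟨φ, v'⟩⟩ := z
  simp only [rapColl]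
  generalize hs : shift (tmass α β v) (tmass α β v') (φ - θ) = s
  have h1 : θ + s - (φ - θ) - (θ + s) = -(φ - θ) := by ring
  rw [h1, shift_neg, hs]
  ext <;> simp

/-- A map of the plane that translates one coordinate by a function of the difference and flips
the difference preserves area. -/
lemma lintegral_shear {h : ℝ → ℝ} (hh : Measurable h) {f : ℝ → ℝ → ENNReal}
    (hf : Measurable (Function.uncurry f)) :
    ∫⁻ θ, ∫⁻ φ, f (θ + h (φ - θ)) (θ + h (φ - θ) - (φ - θ)) = ∫⁻ θ, ∫⁻ φ, f θ φ := by
  calc ∫⁻ θ, ∫⁻ φ, f (θ + h (φ - θ)) (θ + h (φ - θ) - (φ - θ))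
      = ∫⁻ θ, ∫⁻ δ, f (θ + h δ) (θ + h δ - δ) :=
        lintegral_congr fun θ =>
          lintegral_sub_right_eq_self (fun δ => f (θ + h δ) (θ + h δ - δ)) θ
    _ = ∫⁻ δ, ∫⁻ θ, f (θ + h δ) (θ + h δ - δ) := by
        refine lintegral_lintegral_swap (Measurable.aemeasurable ?_)
        exact hf.comp (f := fun z : ℝ × ℝ => (z.1 + h z.2, z.1 + h z.2 - z.2)) (by fun_prop)
    _ = ∫⁻ δ, ∫⁻ θ, f θ (θ - δ) :=
        lintegral_congr fun δ =>
          lintegral_add_right_eq_self (fun θ => f θ (θ - δ)) (h δ)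
    _ = ∫⁻ θ, ∫⁻ δ, f θ (θ - δ) := by
        refine lintegral_lintegral_swap (Measurable.aemeasurable ?_)
        exact hf.comp (f := fun z : ℝ × ℝ => (z.2, z.2 - z.1)) (by fun_prop)
    _ = ∫⁻ θ, ∫⁻ φ, f θ φ :=
        lintegral_congr fun θ => lintegral_sub_left_eq_self (fun φ => f θ φ) θ

/-- Tonelli on the space of pairs (rapidity, transverse momentum), with the two rapidities as innermost variables. -/
lemma lintegral_four {V : Type*} [MeasurableSpace V] (ρ : Measure V) [SFinite ρ]
    {f : (ℝ × V) × (ℝ × V) → ENNReal} (hf : Measurable f) :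
    ∫⁻ z, f z ∂((volume.prod ρ).prod (volume.prod ρ)) =
      ∫⁻ v, ∫⁻ v', ∫⁻ θ, ∫⁻ φ, f ((θ, v), (φ, v')) ∂volume ∂volume ∂ρ ∂ρ := by
  rw [lintegral_prod _ hf.aemeasurable, lintegral_prod_symm' _ hf.lintegral_prod_right']
  refine lintegral_congr fun v => ?_
  have h : ∀ θ, ∫⁻ y, f ((θ, v), y) ∂(volume.prod ρ) = ∫⁻ v', ∫⁻ φ, f ((θ, v), (φ, v'))
      ∂volume ∂ρ :=
    fun θ => lintegral_prod_symm' _ (by fun_prop)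
  simp_rw [h]
  rw [lintegral_lintegral_swap]
  · refine Measurable.aemeasurable ?_
    refine Measurable.lintegral_prod_right
      (f := fun (z : ℝ × V) (φ : ℝ) => f ((z.1, v), (φ, z.2))) ?_
    fun_prop

lemma measurePreserving_rapColl {α β : ℝ} {o : E3} (ρ : Measure (Perp α β o)) [SFinite ρ] :
    MeasurePreserving rapColl (((volume : Measure ℝ).prod ρ).prod (volume.prod ρ))
      ((volume.prod ρ).prod (volume.prod ρ)) := by
  refine ⟨measurable_rapColl, Measure.ext_of_lintegral _ fun f hf => ?_⟩
  rw [lintegral_map hf measurable_rapColl,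
    lintegral_four ρ (f := fun z => f (rapColl z)) (hf.comp measurable_rapColl),
    lintegral_four ρ hf]
  refine lintegral_congr fun v => lintegral_congr fun v' => ?_
  refine lintegral_shear (h := shift (tmass α β v) (tmass α β v'))
    (f := fun θ φ => f ((θ, v), (φ, v'))) ?_ ?_
  · unfold shift; fun_prop
  · unfold Function.uncurry; fun_prop

/-- The collision map `(p̄, q̄) ↦ (p̄′, q̄′)` for a fixed direction `ω`. -/
def coll (α β : ℝ) (ω : E3) (z : E3 × E3) : E3 × E3 :=
  (pPr α β z.1 z.2 ω, qPr α β z.1 z.2 ω)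

lemma measurable_coll (α β : ℝ) : Measurable fun z : E3 × (E3 × E3) => coll α β z.1 z.2 := by
  have h := measurable_pZ α β
  unfold coll pPr qPr collC collE omHat mdot
  fun_prop

/-- In rapidity variables the collision map is `rapColl`. Only the components along `ω̂` change,
and there the claim is a rational identity in `exp θ`, `exp φ` and the transverse masses. -/
lemma coll_Psi {α β : ℝ} {ω : E3} (ho : mdot α β (omHat α β ω) (omHat α β ω) = 1)
    (z : (ℝ × Perp α β (omHat α β ω)) × (ℝ × Perp α β (omHat α β ω))) :
    coll α β ω (Prod.map Psi Psi z) = Prod.map Psi Psi (rapColl z) := by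
  obtain ⟨⟨θ, v⟩, ⟨φ, v'⟩⟩ := z
  have ha := tmass_pos α β v
  have hb := tmass_pos α β v'
  simp only [coll, pPr, qPr, collC, collE, Prod.map, Psi, rapColl, pZ_line ho]
  rw [sub_eq_add_neg (_ • _) (_ • _), ← neg_smul, mdot_add_right, mdot_smul_right,
    mdot_smul_right, mdot_line ho, mdot_line ho, mdot_add_right, mdot_line ho, mdot_line ho]
  generalize tmass α β v = a at *
  generalize tmass α β v' = b at *
  have hX := exp_pos θ
  have hY := exp_pos φ
  have hK : exp (shift a b (φ - θ)) =
      (a + b * (exp φ / exp θ)) / (a + b * (exp θ / exp φ)) := by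
    rw [shift, exp_log (by positivity), exp_sub, neg_sub, exp_sub]
  have hθ : exp (θ + shift a b (φ - θ)) =
      exp θ * ((a + b * (exp φ / exp θ)) / (a + b * (exp θ / exp φ))) := by
    rw [exp_add, hK]
  have hφ : exp (θ + shift a b (φ - θ) - (φ - θ)) =
      exp θ * ((a + b * (exp φ / exp θ)) / (a + b * (exp θ / exp φ))) / (exp φ / exp θ) := by
    rw [exp_sub, hθ, exp_sub]
  have hden : (a * cosh θ + b * cosh φ) ^ 2 - (a * sinh θ + b * sinh φ) ^ 2 =
      (a * exp θ + b * exp φ) * (a / exp θ + b / exp φ) := by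
    simp only [cosh_eq, sinh_eq, exp_neg]
    field_simp
    ring
  have hca := (mul_pos ha (cosh_pos θ)).ne'
  have hcb := (mul_pos hb (cosh_pos φ)).ne'
  have hnum : 2 * (a * cosh θ) * (b * cosh φ) * (a * cosh θ + b * cosh φ) *
      ((b * cosh φ)⁻¹ * (b * sinh φ) + -(a * cosh θ)⁻¹ * (a * sinh θ)) =
      2 * (a * cosh θ + b * cosh φ) * (b * sinh φ * (a * cosh θ) - a * sinh θ * (b * cosh φ)) := by
    field_simp
    ring
  rw [hden, hnum]
  have h1 : a * sinh θ + 2 * (a * cosh θ + b * cosh φ) *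
        (b * sinh φ * (a * cosh θ) - a * sinh θ * (b * cosh φ)) /
        ((a * exp θ + b * exp φ) * (a / exp θ + b / exp φ)) =
      a * sinh (θ + shift a b (φ - θ)) := by
    rw [sinh_eq (θ + _), exp_neg (θ + _), hθ]
    simp only [cosh_eq, sinh_eq, exp_neg]
    generalize exp θ = X at *
    generalize exp φ = Y at *
    field_simp
    ring
  have h2 : b * sinh φ - 2 * (a * cosh θ + b * cosh φ) *
        (b * sinh φ * (a * cosh θ) - a * sinh θ * (b * cosh φ)) /
        ((a * exp θ + b * exp φ) * (a / exp θ + b / exp φ)) =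
      b * sinh (θ + shift a b (φ - θ) - (φ - θ)) := by
    rw [sinh_eq (θ + _ - _), exp_neg (θ + _ - _), hφ]
    simp only [cosh_eq, sinh_eq, exp_neg]
    generalize exp θ = X at *
    generalize exp φ = Y at *
    field_simp
    ring
  rw [← h1, ← h2, add_smul, sub_smul]
  refine Prod.ext ?_ ?_ <;> dsimp only <;> abel

lemma coll_coll {α β : ℝ} {ω : E3} (ho : mdot α β (omHat α β ω) (omHat α β ω) = 1)
    (z : E3 × E3) : coll α β ω (coll α β ω z) = z := by
  obtain ⟨y, rfl⟩ := (Psi_surjective ho).prodMap (Psi_surjective ho) z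
  rw [coll_Psi ho, coll_Psi ho, rapColl_rapColl]

/-- For a fixed direction the collision map preserves `dp̄ dq̄/(p⁰q⁰)`. -/
lemma measurePreserving_coll {α β : ℝ} {ω : E3}
    (ho : mdot α β (omHat α β ω) (omHat α β ω) = 1) :
    MeasurePreserving (coll α β ω) ((invMeas α β).prod (invMeas α β))
      ((invMeas α β).prod (invMeas α β)) := by
  obtain ⟨ρ, hs, hρ⟩ := exists_perp_measure ho
  have hΨ := (measurePreserving_Psi ho hρ).prod (measurePreserving_Psi ho hρ)
  have hm : Measurable (coll α β ω) := (measurable_coll α β).comp measurable_prodMk_left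
  refine ⟨hm, ?_⟩
  have h := (hΨ.comp (measurePreserving_rapColl ρ)).map_eq
  have hc : Prod.map Psi Psi ∘ rapColl = coll α β ω ∘
      Prod.map (Psi : ℝ × Perp α β (omHat α β ω) → E3) Psi :=
    funext fun z => (coll_Psi ho z).symm
  rw [hc, ← Measure.map_map hm hΨ.measurable, hΨ.map_eq] at h
  exact h

/-! ### Equality of gain and loss -/

instance : IsFiniteMeasure sphMeas := by unfold sphMeas; infer_instance

/-- The measure `dω dp̄/p⁰ dq̄/q⁰`. -/
abbrev fullMeas (α β : ℝ) : Measure (Metric.sphere (0 : E3) 1 × (E3 × E3)) :=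
  sphMeas.prod ((invMeas α β).prod (invMeas α β))

/-- The collision map with its direction as an additional, unchanged variable. -/
def fullColl (α β : ℝ) (y : Metric.sphere (0 : E3) 1 × (E3 × E3)) :
    Metric.sphere (0 : E3) 1 × (E3 × E3) := (y.1, coll α β y.1 y.2)

lemma mdot_omHat_sphere {α β : ℝ} (hα : 0 < α) (hβ : 0 < β) (ω : Metric.sphere (0 : E3) 1) :
    mdot α β (omHat α β ω) (omHat α β ω) = 1 :=
  mdot_omHat hα hβ (ne_zero_of_mem_unit_sphere ω)

lemma measurable_collS (α β : ℝ) :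
    Measurable fun y : Metric.sphere (0 : E3) 1 × (E3 × E3) => coll α β y.1 y.2 :=
  (measurable_coll α β).comp (measurable_subtype_coe.prodMap measurable_id)

lemma measurePreserving_fullColl {α β : ℝ} (hα : 0 < α) (hβ : 0 < β) :
    MeasurePreserving (fullColl α β) (fullMeas α β) (fullMeas α β) :=
  (MeasurePreserving.id sphMeas).skew_product (g := fun ω z => coll α β ω z)
    (measurable_collS α β)
    (Filter.Eventually.of_forall fun ω =>
      (measurePreserving_coll (mdot_omHat_sphere hα hβ ω)).map_eq)

/-- Fubini for `fullMeas`, in the order of integration used by the collision operators. -/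
lemma fubini {α β : ℝ} {F : Metric.sphere (0 : E3) 1 × (E3 × E3) → ℝ}
    (hF : Integrable F (fullMeas α β)) :
    Integrable (fun p => (pZ α β p)⁻¹ *
        ∫ q : E3, (pZ α β q)⁻¹ * ∫ ω, F (ω, (p, q)) ∂sphMeas) volume ∧
      ∫ p, (pZ α β p)⁻¹ * (∫ q : E3, (pZ α β q)⁻¹ * ∫ ω, F (ω, (p, q)) ∂sphMeas) =
        ∫ y, F y ∂(fullMeas α β) := by
  have hd := measurable_dens α β
  have hq : ∀ p, ∫ q : E3, (pZ α β q)⁻¹ * ∫ ω, F (ω, (p, q)) ∂sphMeas =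
      ∫ q, ∫ ω, F (ω, (p, q)) ∂sphMeas ∂(invMeas α β) := fun p => by
    rw [invMeas, integral_withDensity_eq_integral_smul hd]
    simp only [NNReal.smul_def, coe_dens, smul_eq_mul]
  have h1 := hF.integral_prod_right
  have h2 := h1.integral_prod_left
  simp only [hq]
  constructor
  · have := (integrable_withDensity_iff_integrable_smul hd).1 h2
    simpa only [NNReal.smul_def, coe_dens, smul_eq_mul] using this
  · rw [integral_prod_symm _ hF, integral_prod _ h1]
    conv_rhs => rw [invMeas, integral_withDensity_eq_integral_smul hd]
    simp only [NNReal.smul_def, coe_dens, smul_eq_mul]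
    rfl

lemma invMeas_le (α β : ℝ) : invMeas α β ≤ volume := by
  conv_rhs => rw [← withDensity_one (μ := (volume : Measure E3))]
  refine withDensity_mono (Filter.Eventually.of_forall fun p => ?_)
  have : dens α β p ≤ 1 := by
    rw [← NNReal.coe_le_coe, coe_dens]
    exact inv_le_one_of_one_le₀ (pZ_ge_one α β p)
  change (dens α β p : ENNReal) ≤ 1
  exact_mod_cast this

/-- The gain and loss terms, weighted with `1/p⁰`, are integrable with the same integral. -/
lemma integral_gain_loss {C₁ α β : ℝ} (hα : 0 < α) (hβ : 0 < β)
    {S₀ : E3 → E3 → E3 → E3 → ℝ}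
    (hm : Measurable fun x : (E3 × E3) × E3 × E3 => S₀ x.1.1 x.1.2 x.2.1 x.2.2)
    (h0 : ∀ p q p' q', 0 ≤ S₀ p q p' q') (h1 : ∀ p q p' q', S₀ p q p' q' ≤ C₁)
    (hsymm : ∀ p q p' q', S₀ p q p' q' = S₀ p' q' p q)
    {f : E3 → ℝ} (hfi : Integrable f volume) :
    Integrable (fun p => (pZ α β p)⁻¹ * Qplus α β S₀ f f p) volume ∧
    Integrable (fun p => (pZ α β p)⁻¹ * Qminus α β S₀ f f p) volume ∧
    ∫ p, (pZ α β p)⁻¹ * Qplus α β S₀ f f p = ∫ p, (pZ α β p)⁻¹ * Qminus α β S₀ f f p := by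
  let F : Metric.sphere (0 : E3) 1 × (E3 × E3) → ℝ := fun y =>
    f y.2.1 * f y.2.2 * S₀ y.2.1 y.2.2 (pPr α β y.2.1 y.2.2 y.1) (qPr α β y.2.1 y.2.2 y.1)
  have hfμ : Integrable f (invMeas α β) := hfi.mono_measure (invMeas_le α β)
  have hF : Integrable F (fullMeas α β) := by
    have hprod : Integrable (fun y : Metric.sphere (0 : E3) 1 × (E3 × E3) => f y.2.1 * f y.2.2)
        (fullMeas α β) := (hfμ.mul_prod hfμ).comp_snd sphMeas
    refine hprod.mul_bdd (c := C₁) ?_ (Filter.Eventually.of_forall fun y => ?_)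
    · exact (hm.comp (measurable_snd.prodMk (measurable_collS α β))).aestronglyMeasurable
    · rw [Real.norm_eq_abs, abs_of_nonneg (h0 _ _ _ _)]
      exact h1 _ _ _ _
  have hT := measurePreserving_fullColl hα hβ
  have hFT : Integrable (fun y => F (fullColl α β y)) (fullMeas α β) :=
    hT.integrable_comp_of_integrable hF
  have hFint : ∫ y, F (fullColl α β y) ∂(fullMeas α β) = ∫ y, F y ∂(fullMeas α β) := by
    conv_rhs => rw [← hT.map_eq]
    rw [integral_map hT.measurable.aemeasurable]
    rw [hT.map_eq]
    exact hF.aestronglyMeasurable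
  -- The collision map is an involution, so the symmetry of `S₀` makes the kernel invariant.
  have hgain : ∀ p q (ω : Metric.sphere (0 : E3) 1), F (fullColl α β (ω, (p, q))) =
      f (pPr α β p q ω) * f (qPr α β p q ω) * S₀ p q (pPr α β p q ω) (qPr α β p q ω) := by
    intro p q ω
    have h := coll_coll (mdot_omHat_sphere hα hβ ω) (p, q)
    simp only [coll, Prod.mk.injEq] at h
    simp only [F, fullColl, coll]
    rw [h.1, h.2, ← hsymm]
  have hp := fubini hFT
  have hl := fubini hF
  rw [hFint] at hp
  simp only [hgain] at hp
  have e1 : ∀ p, (pZ α β p)⁻¹ * Qplus α β S₀ f f p = α * β ^ 2 * ((pZ α β p)⁻¹ *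
      ∫ q : E3, (pZ α β q)⁻¹ * ∫ ω : Metric.sphere (0 : E3) 1,
        f (pPr α β p q ω) * f (qPr α β p q ω) *
          S₀ p q (pPr α β p q ω) (qPr α β p q ω) ∂sphMeas) := fun p => by
    rw [Qplus]; ring
  have e2 : ∀ p, (pZ α β p)⁻¹ * Qminus α β S₀ f f p = α * β ^ 2 * ((pZ α β p)⁻¹ *
      ∫ q : E3, (pZ α β q)⁻¹ * ∫ ω, F (ω, (p, q)) ∂sphMeas) := fun p => by
    rw [Qminus]; ring
  simp only [e1, e2]
  refine ⟨hp.1.const_mul _, hl.1.const_mul _, ?_⟩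
  rw [integral_const_mul, integral_const_mul, hp.2, hl.2]

lemma norm_eq_integral {f : L1} (hf : 0 ≤ᵐ[volume] ⇑f) : ‖f‖ = ∫ p, f p := by
  rw [L1.norm_eq_integral_norm]
  refine integral_congr_ae ?_
  filter_upwards [hf] with p hp
  exact Real.norm_of_nonneg hp

end

theorem statement_7
    (C₀ C₁ α β : ℝ) (hC₀ : 0 < C₀) (hC₁ : 0 < C₁) (hα : C₀ ≤ α) (hβ : C₀ ≤ β)
    (S₀ : E3 → E3 → E3 → E3 → ℝ)
    (hS₀meas : Measurable fun x : (E3 × E3) × E3 × E3 => S₀ x.1.1 x.1.2 x.2.1 x.2.2)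
    (hS₀nonneg : ∀ p q p' q', 0 ≤ S₀ p q p' q')
    (hS₀bdd : ∀ p q p' q', S₀ p q p' q' ≤ C₁)
    (hS₀symm : ∀ p q p' q', S₀ p q p' q' = S₀ p' q' p q)
    (r : ℝ) (hr : 0 < r) (n : ℕ) (hn : 1 ≤ n) (u w : L1)
    (hu : memX r u) (hw : memX r w)
    (heq : (fun p : E3 => Real.sqrt n * w p - (pZ α β p)⁻¹ * Qcoll α β S₀ (⇑w) (⇑w) p)
      =ᵐ[volume] ⇑u) :
    Real.sqrt n * ‖w‖ = ‖u‖ := by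
  have hα0 := hC₀.trans_le hα
  have hβ0 := hC₀.trans_le hβ
  have hwi : Integrable (⇑w) volume := L1.integrable_coeFn w
  obtain ⟨hp, hl, hpl⟩ := integral_gain_loss hα0 hβ0 hS₀meas hS₀nonneg hS₀bdd hS₀symm hwi
  rw [norm_eq_integral hw.1, norm_eq_integral hu.1, ← integral_congr_ae heq]
  simp only [Qcoll, mul_sub]
  rw [integral_sub (hwi.const_mul _) (by exact hp.sub hl), integral_sub hp hl, hpl, sub_self, sub_zero,
    integral_const_mul]
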